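/- Suppose ω is an alternating bilinear form on V₂ that is multiplicative. Then for all a ∈ W₂ and x ∈ W₁ one has C₄₁(∂₁ x, a) = C₃₂(∂₂ a, x) + C₃₂(x, ∂₂ a); explicitly, ω((0,0,0,∂₁ x),(a,0,0,0)) = ω((0,0,∂₂ a,0),(0,x,0,0)) + ω((0,0,x,0),(0,∂₂ a,0,0)). -/

import Mathlib

/-!
Write `Cᵢⱼ` for the component of `ω` pairing slots `i` and `j` of `V₂`. Evaluate multiplicativity
on two `3`-simplices, each supported on a single coordinate of `V₃`. For the pairs of coordinates
`(x, c)`, `(y, b)` and `(z, a)`, no face other than `f₃` sees both members, so `ω` vanishes on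
their images under `f₃`. The first of these three identities expresses `C₄₁(∂₁ x, a)` through
`C₂₁(x, a)` and `C₃₁(x, a)`, and the other two express these through `C₂₃(x, ∂₂ a)` and
`C₃₂(x, ∂₂ a)`. Skew-symmetry turns `-C₂₃(x, ∂₂ a)` into `C₃₂(∂₂ a, x)`.
-/

/-- The space `V₂` of `2`-simplices of the simplicial module attached to a complex
`W₂ → W₁ → W₀`. -/
abbrev TwoSimplex (W0 W1 W2 : Type*) : Type _ := W2 × W1 × W1 × W0

/-- The space `V₃` of `3`-simplices of the simplicial module attached to a complex
`W₂ → W₁ → W₀`, with coordinates `(a, b, c, x, y, z, m)`. -/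
abbrev ThreeSimplex (W0 W1 W2 : Type*) : Type _ := W2 × W2 × W2 × W1 × W1 × W1 × W0

section

variable {R W0 W1 W2 N : Type*} [CommRing R]
  [AddCommGroup W0] [Module R W0] [AddCommGroup W1] [Module R W1]
  [AddCommGroup W2] [Module R W2] [AddCommGroup N] [Module R N]
  {d2 : W2 →ₗ[R] W1} {d1 : W1 →ₗ[R] W0}
  {ω : LinearMap.BilinMap R (TwoSimplex W0 W1 W2) N}

/-- The face maps `f₀, f₁, f₂, f₃ : V₃ → V₂`, indexed by `Fin 4`. -/
def ThreeSimplex.face (d2 : W2 →ₗ[R] W1) (d1 : W1 →ₗ[R] W0) :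
    Fin 4 → ThreeSimplex W0 W1 W2 → TwoSimplex W0 W1 W2
  | 0, (a, _, _, x, y, _, m) => (a, x, y, m)
  | 1, (_, b, _, x, _, z, m) => (b, x, z, m)
  | 2, (_, _, c, _, y, z, m) => (c, y, z, m)
  | 3, (a, b, c, x, y, z, m) => (c - b + a, d2 a + y - x, d2 b + z - x, m - d1 x)

open ThreeSimplex (face)

/-- Multiplicativity of a bilinear form on `V₂`: the alternating sum of its pullbacks to `V₃` along
the face maps vanishes. -/
def IsMultiplicativeForm (d2 : W2 →ₗ[R] W1) (d1 : W1 →ₗ[R] W0)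
    (ω : LinearMap.BilinMap R (TwoSimplex W0 W1 W2) N) : Prop :=
  ∀ u v : ThreeSimplex W0 W1 W2,
    ∑ i : Fin 4, (-1 : ℤ) ^ (i : ℕ) • ω (face d2 d1 i u) (face d2 d1 i v) = 0

theorem isMultiplicativeForm_iff :
    IsMultiplicativeForm d2 d1 ω ↔
      ∀ (a b c : W2) (x y z : W1) (m : W0) (a' b' c' : W2) (x' y' z' : W1) (m' : W0),
        ω (a, x, y, m) (a', x', y', m')
        - ω (b, x, z, m) (b', x', z', m')
        + ω (c, y, z, m) (c', y', z', m')
        - ω (c - b + a, d2 a + y - x, d2 b + z - x, m - d1 x)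
            (c' - b' + a', d2 a' + y' - x', d2 b' + z' - x', m' - d1 x') = 0 := by
  simp only [IsMultiplicativeForm, Prod.forall, Fin.sum_univ_four, face]
  norm_num [pow_succ, ← sub_eq_add_neg]

namespace IsMultiplicativeForm

theorem apply_face_eq_zero (hω : IsMultiplicativeForm d2 d1 ω) {u v : ThreeSimplex W0 W1 W2}
    {j : Fin 4} (huv : ∀ i ≠ j, face d2 d1 i u = 0 ∨ face d2 d1 i v = 0) :
    ω (face d2 d1 j u) (face d2 d1 j v) = 0 := by
  have hj := hω u v
  rw [Fintype.sum_eq_single j] at hj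
  · exact ((isUnit_neg_one.pow _).smul_eq_zero).1 hj
  · intro i hi
    rcases huv i hi with h | h <;> simp [h]

theorem apply_second_first (hω : IsMultiplicativeForm d2 d1 ω) (x : W1) (a : W2) :
    ω (0, x, 0, 0) (a, 0, 0, 0) = ω (0, x, 0, 0) (0, 0, d2 a, 0) := by
  have h := hω.apply_face_eq_zero (u := (0, 0, 0, 0, x, 0, 0)) (v := (0, -a, 0, 0, 0, 0, 0))
    (j := 3) (by simp [Fin.forall_fin_succ, face])
  rw [← sub_eq_zero, ← map_sub]
  simpa [face] using h

theorem apply_third_first (hω : IsMultiplicativeForm d2 d1 ω) (x : W1) (a : W2) :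
    ω (0, 0, x, 0) (a, 0, 0, 0) = -ω (0, 0, x, 0) (0, d2 a, 0, 0) := by
  have h := hω.apply_face_eq_zero (u := (0, 0, 0, 0, 0, x, 0)) (v := (a, 0, 0, 0, 0, 0, 0))
    (j := 3) (by simp [Fin.forall_fin_succ, face])
  rw [← add_eq_zero_iff_eq_neg, ← map_add]
  simpa [face] using h

theorem apply_fourth_first (hω : IsMultiplicativeForm d2 d1 ω) (x : W1) (a : W2) :
    ω (0, 0, 0, d1 x) (a, 0, 0, 0) =
      -(ω (0, x, 0, 0) (a, 0, 0, 0) + ω (0, 0, x, 0) (a, 0, 0, 0)) := by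
  have h := hω.apply_face_eq_zero (u := (0, 0, 0, -x, 0, 0, 0)) (v := (0, 0, a, 0, 0, 0, 0))
    (j := 3) (by simp [Fin.forall_fin_succ, face])
  rw [← add_eq_zero_iff_eq_neg, ← LinearMap.add_apply, ← LinearMap.add_apply, ← map_add, ← map_add]
  simpa [face] using h

end IsMultiplicativeForm

theorem stmt_3_general (hω : IsMultiplicativeForm d2 d1 ω) (a : W2) (x : W1) :
    ω (0, 0, 0, d1 x) (a, 0, 0, 0) =
      ω (0, 0, x, 0) (0, d2 a, 0, 0) - ω (0, x, 0, 0) (0, 0, d2 a, 0) := by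
  rw [hω.apply_fourth_first, hω.apply_second_first, hω.apply_third_first]
  abel

end

/-- For a multiplicative alternating bilinear form `ω` on
`V₂ = W₂ × W₁ × W₁ × W₀`, one has `C₄₁(∂₁ x, a) = C₃₂(∂₂ a, x) + C₃₂(x, ∂₂ a)`. -/
theorem stmt_3
    (W0 W1 W2 : Type*)
    [AddCommGroup W0] [Module ℝ W0]
    [AddCommGroup W1] [Module ℝ W1]
    [AddCommGroup W2] [Module ℝ W2]
    (d2 : W2 →ₗ[ℝ] W1) (d1 : W1 →ₗ[ℝ] W0)
    (hd : ∀ a : W2, d1 (d2 a) = 0)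
    (ω : (W2 × W1 × W1 × W0) →ₗ[ℝ] (W2 × W1 × W1 × W0) →ₗ[ℝ] ℝ)
    (halt : ∀ v, ω v v = 0)
    (hmult : ∀ (a b c : W2) (x y z : W1) (m : W0)
        (a' b' c' : W2) (x' y' z' : W1) (m' : W0),
      ω (a, x, y, m) (a', x', y', m')
      - ω (b, x, z, m) (b', x', z', m')
      + ω (c, y, z, m) (c', y', z', m')
      - ω (c - b + a, d2 a + y - x, d2 b + z - x, m - d1 x)
          (c' - b' + a', d2 a' + y' - x', d2 b' + z' - x', m' - d1 x') = 0) :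
    ∀ (a : W2) (x : W1),
      ω (0, 0, 0, d1 x) (a, 0, 0, 0)
        = ω (0, 0, d2 a, 0) (0, x, 0, 0) + ω (0, 0, x, 0) (0, d2 a, 0, 0) := by
  intro a x
  have skew := LinearMap.IsAlt.neg halt (0, x, 0, 0) (0, 0, d2 a, 0)
  rw [stmt_3_general (isMultiplicativeForm_iff.2 hmult), ← skew, sub_eq_neg_add]
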